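/- For any μ > 0, ν > 0 and ε > 0, the θ-periodic solution S_μ^ν of the regularized cell problem, which depends on the parameters t and τ, satisfies ‖∂S_μ^ν/∂t‖_{L^∞_#(ℝ,L²(𝕋²))} ≤ γ₃ and ‖∂S_μ^ν/∂τ‖_{L^∞_#(ℝ,L²(𝕋²))} ≤ √ε γ₃, where γ₃ depends only on γ and ν. -/

import Mathlib

open MeasureTheory Filter

noncomputable section

/-- Fundamental domain of the two-dimensional torus `𝕋² = ℝ²/ℤ²`. -/
def Tsq : Set (ℝ × ℝ) := Set.Icc (0:ℝ) 1 ×ˢ Set.Icc (0:ℝ) 1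

/-- Periodicity of period 1 in each space direction: a function on `ℝ²`
defining a function on the torus `𝕋²`. -/
def SpacePeriodic {E : Type*} (f : (ℝ × ℝ) → E) : Prop :=
  ∀ x : ℝ × ℝ, f (x + (1, 0)) = f x ∧ f (x + (0, 1)) = f x

/-- Gradient of a scalar function on `ℝ²`. -/
def grad (f : (ℝ × ℝ) → ℝ) (x : ℝ × ℝ) : ℝ × ℝ :=
  (fderiv ℝ f x (1, 0), fderiv ℝ f x (0, 1))

/-- Divergence of a vector field on `ℝ²`. -/
def div2 (F : (ℝ × ℝ) → ℝ × ℝ) (x : ℝ × ℝ) : ℝ :=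
  fderiv ℝ (fun y => (F y).1) x (1, 0) + fderiv ℝ (fun y => (F y).2) x (0, 1)

/-- Laplacian of a scalar function on `ℝ²`. -/
def lap (f : (ℝ × ℝ) → ℝ) (x : ℝ × ℝ) : ℝ := div2 (grad f) x

/-- `L²(𝕋²)` norm of a scalar function. -/
def L2norm (f : (ℝ × ℝ) → ℝ) : ℝ := (∫ x in Tsq, (f x) ^ 2) ^ (1/2 : ℝ)

/-- `L^∞(𝕋²)` norm of a (bounded) function. -/
def LinfNorm (f : (ℝ × ℝ) → ℝ) : ℝ := ⨆ x : ℝ × ℝ, |f x|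

/-- `L²_#(ℝ×𝕋²)` norm : `(∫₀¹ ∫_{𝕋²} f² dx dθ)^{1/2}` for functions
1-periodic in `θ`. -/
def L2sharpNorm (f : ℝ → (ℝ × ℝ) → ℝ) : ℝ :=
  (∫ θ in Set.Icc (0:ℝ) 1, ∫ x in Tsq, (f θ x) ^ 2) ^ (1/2 : ℝ)

/-- `L^∞_#(ℝ, L²(𝕋²))` norm : `sup_{θ ∈ [0,1]} ‖f(θ,·)‖_{L²(𝕋²)}`. -/
def LinfL2Norm (f : ℝ → (ℝ × ℝ) → ℝ) : ℝ :=
  ⨆ θ : Set.Icc (0:ℝ) 1, L2norm (f θ.1)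

/-- Regular nonnegative scalar coefficient `Ã_ε(t,τ,θ,x)` and regular vector field
`C̃_ε(t,τ,θ,x)`, 1-periodic in `τ` and in `θ` (and in space), together with the
bounds (H1) and (H2) with constant `γ`. -/
def CoeffBasic (γ ε : ℝ)
    (A : ℝ → ℝ → ℝ → (ℝ × ℝ) → ℝ) (C : ℝ → ℝ → ℝ → (ℝ × ℝ) → ℝ × ℝ) : Prop :=
  ContDiff ℝ (⊤ : ℕ∞) (fun p : ℝ × ℝ × ℝ × (ℝ × ℝ) => A p.1 p.2.1 p.2.2.1 p.2.2.2) ∧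
  ContDiff ℝ (⊤ : ℕ∞) (fun p : ℝ × ℝ × ℝ × (ℝ × ℝ) => C p.1 p.2.1 p.2.2.1 p.2.2.2) ∧
  (∀ t τ θ x, 0 ≤ A t τ θ x) ∧
  (∀ t τ θ x, A t (τ + 1) θ x = A t τ θ x ∧ A t τ (θ + 1) x = A t τ θ x ∧
      C t (τ + 1) θ x = C t τ θ x ∧ C t τ (θ + 1) x = C t τ θ x) ∧
  (∀ t τ θ, SpacePeriodic (A t τ θ) ∧ SpacePeriodic (C t τ θ)) ∧
  -- (H1)
  (∀ t τ θ x,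
    |A t τ θ x| ≤ γ ∧ ‖C t τ θ x‖ ≤ γ ∧
    |deriv (fun s => A s τ θ x) t| ≤ γ ∧ ‖deriv (fun s => C s τ θ x) t‖ ≤ γ ∧
    |deriv (fun σ => A t τ σ x) θ| ≤ γ ∧ ‖deriv (fun σ => C t τ σ x) θ‖ ≤ γ ∧
    ‖grad (A t τ θ) x‖ ≤ γ ∧ |div2 (C t τ θ) x| ≤ γ ∧
    ‖deriv (fun s => grad (A s τ θ) x) t‖ ≤ γ ∧
    |deriv (fun s => div2 (C s τ θ) x) t| ≤ γ) ∧
  -- (H2)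
  (∀ t τ θ x,
    |deriv (fun s => A t s θ x) τ| ≤ Real.sqrt ε * γ ∧
    ‖deriv (fun s => C t s θ x) τ‖ ≤ Real.sqrt ε * γ ∧
    ‖deriv (fun s => grad (A t s θ) x) τ‖ ≤ Real.sqrt ε * γ)

/-- The threshold hypotheses (H3), (H4) and (H5). -/
def CoeffThreshold (γ Gthr θa θw ε : ℝ)
    (A : ℝ → ℝ → ℝ → (ℝ × ℝ) → ℝ) (C : ℝ → ℝ → ℝ → (ℝ × ℝ) → ℝ × ℝ) : Prop :=
  -- (H3)
  (0 < Gthr ∧ θa < θw ∧ θa ∈ Set.Icc (0:ℝ) 1 ∧ θw ∈ Set.Icc (0:ℝ) 1 ∧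
    ∀ t τ : ℝ, ∀ x : ℝ × ℝ, ∀ θ ∈ Set.Icc θa θw, Gthr ≤ A t τ θ x) ∧
  -- (H4)
  (∀ t τ θ x, A t τ θ x ≤ Gthr →
    deriv (fun s => A s τ θ x) t = 0 ∧ deriv (fun s => A t s θ x) τ = 0 ∧
    grad (A t τ θ) x = 0 ∧
    deriv (fun s => C s τ θ x) t = 0 ∧ deriv (fun s => C t s θ x) τ = 0 ∧
    div2 (C t τ θ) x = 0) ∧
  -- (H5)
  (∀ t τ θ x,
    ‖C t τ θ x‖ ≤ γ * A t τ θ x ∧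
    ‖C t τ θ x‖ ^ 2 ≤ γ * A t τ θ x ∧
    ‖grad (A t τ θ) x‖ ≤ γ * A t τ θ x ∧
    |deriv (fun s => A s τ θ x) t| ≤ γ * A t τ θ x ∧
    ‖deriv (fun s => grad (A s τ θ) x) t‖ ^ 2 ≤ γ * A t τ θ x ∧
    |deriv (fun s => A t s θ x) τ| ^ 2 ≤ ε * γ * A t τ θ x ∧
    ‖deriv (fun s => grad (A t s θ) x) τ‖ ^ 2 ≤ ε * γ * A t τ θ x ∧
    |div2 (C t τ θ) x| ≤ γ * A t τ θ x ∧
    ‖deriv (fun s => C s τ θ x) t‖ ≤ γ * A t τ θ x ∧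
    ‖deriv (fun s => C s τ θ x) t‖ ^ 2 ≤ γ ^ 2 * A t τ θ x)

/-- `S(t,τ,·,·)` is, for all values of the parameters `t` and `τ`, a classical
solution, 1-periodic in `θ`, of the regularized cell problem
`μ S + ∂S/∂θ − ∇·((Ã_ε(t,τ,·,·) + ν)∇S) = ∇·C̃_ε(t,τ,·,·)`,
depending regularly on `t` and `τ`. -/
def IsRegCellSolP (A : ℝ → ℝ → ℝ → (ℝ × ℝ) → ℝ) (C : ℝ → ℝ → ℝ → (ℝ × ℝ) → ℝ × ℝ)
    (μ ν : ℝ) (S : ℝ → ℝ → ℝ → (ℝ × ℝ) → ℝ) : Prop :=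
  ContDiff ℝ (⊤ : ℕ∞) (fun p : ℝ × ℝ × ℝ × (ℝ × ℝ) => S p.1 p.2.1 p.2.2.1 p.2.2.2) ∧
  (∀ t τ θ x, S t τ (θ + 1) x = S t τ θ x) ∧
  (∀ t τ θ, SpacePeriodic (S t τ θ)) ∧
  (∀ t τ θ x, μ * S t τ θ x + deriv (fun σ => S t τ σ x) θ
      - div2 (fun y => (A t τ θ y + ν) • grad (S t τ θ) y) x = div2 (C t τ θ) x)

/-- `S(t,τ,·,·)` is, for all values of the parameters `t` and `τ`, a classical
solution, 1-periodic in `θ` and with zero spatial mean for every `θ`, of the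
`ν`-regularized cell problem
`∂S/∂θ − ∇·((Ã_ε(t,τ,·,·) + ν)∇S) = ∇·C̃_ε(t,τ,·,·)`. -/
def IsNuCellSolP (A : ℝ → ℝ → ℝ → (ℝ × ℝ) → ℝ) (C : ℝ → ℝ → ℝ → (ℝ × ℝ) → ℝ × ℝ)
    (ν : ℝ) (S : ℝ → ℝ → ℝ → (ℝ × ℝ) → ℝ) : Prop :=
  ContDiff ℝ (⊤ : ℕ∞) (fun p : ℝ × ℝ × ℝ × (ℝ × ℝ) => S p.1 p.2.1 p.2.2.1 p.2.2.2) ∧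
  (∀ t τ θ x, S t τ (θ + 1) x = S t τ θ x) ∧
  (∀ t τ θ, SpacePeriodic (S t τ θ)) ∧
  (∀ t τ θ x, deriv (fun σ => S t τ σ x) θ
      - div2 (fun y => (A t τ θ y + ν) • grad (S t τ θ) y) x = div2 (C t τ θ) x) ∧
  (∀ t τ θ : ℝ, ∫ x in Tsq, S t τ θ x = 0)


lemma cf_isCompact_Tsq : IsCompact Tsq := isCompact_Icc.prod isCompact_Icc

lemma cf_integrable {f : ℝ × ℝ → ℝ} (hf : Continuous f) : IntegrableOn f Tsq :=
  hf.continuousOn.integrableOn_compact cf_isCompact_Tsq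

lemma cf_int_eq {f : ℝ × ℝ → ℝ} (hf : Continuous f) :
    ∫ z in Tsq, f z = ∫ x in (0:ℝ)..1, ∫ y in (0:ℝ)..1, f (x, y) := by
  have h := cf_integrable hf
  unfold Tsq at h ⊢
  rw [Measure.volume_eq_prod] at h ⊢
  rw [setIntegral_prod _ h, intervalIntegral.integral_of_le zero_le_one,
    ← integral_Icc_eq_integral_Ioc]
  refine integral_congr_ae (Eventually.of_forall fun x => ?_)
  simp only
  rw [intervalIntegral.integral_of_le zero_le_one, ← integral_Icc_eq_integral_Ioc]

lemma cf_int_eq' {f : ℝ × ℝ → ℝ} (hf : Continuous f) :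
    ∫ z in Tsq, f z = ∫ y in (0:ℝ)..1, ∫ x in (0:ℝ)..1, f (x, y) := by
  rw [cf_int_eq hf]
  have h : IntegrableOn f (Set.uIoc 0 1 ×ˢ Set.Ioc 0 1) :=
    (cf_integrable hf).mono_set (Set.prod_mono
      (by rw [Set.uIoc_of_le zero_le_one]; exact Set.Ioc_subset_Icc_self) Set.Ioc_subset_Icc_self)
  rw [Measure.volume_eq_prod] at h
  unfold IntegrableOn at h
  rw [← Measure.prod_restrict] at h
  have := intervalIntegral_integral_swap (f := fun x y => f (x, y)) h
  simp only [intervalIntegral.integral_of_le (zero_le_one (α := ℝ))] at this ⊢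
  exact this

lemma cf_vol : ∫ _z in Tsq, (1:ℝ) = 1 := by
  rw [cf_int_eq continuous_const]; simp

lemma cf_const (c : ℝ) : ∫ _z in Tsq, c = c := by
  rw [cf_int_eq continuous_const]; simp

lemma cf_mono {f g : ℝ × ℝ → ℝ} (hf : Continuous f) (hg : Continuous g)
    (h : ∀ z ∈ Tsq, f z ≤ g z) : ∫ z in Tsq, f z ≤ ∫ z in Tsq, g z :=
  setIntegral_mono_on (cf_integrable hf) (cf_integrable hg) cf_isCompact_Tsq.measurableSet h

lemma cf_add {f g : ℝ × ℝ → ℝ} (hf : Continuous f) (hg : Continuous g) :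
    ∫ z in Tsq, (f z + g z) = (∫ z in Tsq, f z) + ∫ z in Tsq, g z :=
  integral_add (cf_integrable hf) (cf_integrable hg)

lemma cf_sub {f g : ℝ × ℝ → ℝ} (hf : Continuous f) (hg : Continuous g) :
    ∫ z in Tsq, (f z - g z) = (∫ z in Tsq, f z) - ∫ z in Tsq, g z :=
  integral_sub (cf_integrable hf) (cf_integrable hg)

/-- integral of a periodic x-derivative vanishes -/
lemma cf_div1 {f f1 : ℝ × ℝ → ℝ} (hf1 : Continuous f1)
    (hd : ∀ x y, HasDerivAt (fun s => f (s, y)) (f1 (x, y)) x)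
    (hp : ∀ y, f (1, y) = f (0, y)) : ∫ z in Tsq, f1 z = 0 := by
  rw [cf_int_eq' hf1]
  have : ∀ y, ∫ x in (0:ℝ)..1, f1 (x, y) = 0 := fun y => by
    rw [intervalIntegral.integral_eq_sub_of_hasDerivAt (fun x _ => hd x y)
      (Continuous.intervalIntegrable (by fun_prop) _ _), hp y, sub_self]
  simp [this]

lemma cf_div2 {f f2 : ℝ × ℝ → ℝ} (hf2 : Continuous f2)
    (hd : ∀ x y, HasDerivAt (fun s => f (x, s)) (f2 (x, y)) y)
    (hp : ∀ x, f (x, 1) = f (x, 0)) : ∫ z in Tsq, f2 z = 0 := by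
  rw [cf_int_eq hf2]
  have : ∀ x, ∫ y in (0:ℝ)..1, f2 (x, y) = 0 := fun x => by
    rw [intervalIntegral.integral_eq_sub_of_hasDerivAt (fun y _ => hd x y)
      (Continuous.intervalIntegrable (by fun_prop) _ _), hp x, sub_self]
  simp [this]

/-- Cauchy-Schwarz on the unit interval, through the variance. -/
lemma cf_sq_int {g : ℝ → ℝ} (hg : Continuous g) :
    (∫ s in (0:ℝ)..1, g s) ^ 2 ≤ ∫ s in (0:ℝ)..1, (g s) ^ 2 := by
  set m := ∫ s in (0:ℝ)..1, g s with hm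
  have h0 : 0 ≤ ∫ s in (0:ℝ)..1, (g s - m) ^ 2 :=
    intervalIntegral.integral_nonneg zero_le_one fun _ _ => sq_nonneg _
  have h1 : ∫ s in (0:ℝ)..1, (g s - m) ^ 2
      = (∫ s in (0:ℝ)..1, (g s) ^ 2) - 2 * m * m + m ^ 2 := by
    have : ∀ s, (g s - m) ^ 2 = (g s) ^ 2 - (2 * m) * g s + m ^ 2 := fun s => by ring
    simp only [this]
    rw [intervalIntegral.integral_add, intervalIntegral.integral_sub,
      intervalIntegral.integral_const_mul, ← hm]
    · simp
    all_goals exact Continuous.intervalIntegrable (by fun_prop) _ _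
  nlinarith

lemma cf_osc {f g : ℝ → ℝ} (hg : Continuous g) (hd : ∀ x, HasDerivAt f (g x) x)
    {a b : ℝ} (ha : a ∈ Set.Icc (0:ℝ) 1) (hb : b ∈ Set.Icc (0:ℝ) 1) :
    (f a - f b) ^ 2 ≤ ∫ s in (0:ℝ)..1, (g s) ^ 2 := by
  have key : ∀ a b : ℝ, a ∈ Set.Icc (0:ℝ) 1 → b ∈ Set.Icc (0:ℝ) 1 → b ≤ a →
      (f a - f b) ^ 2 ≤ ∫ s in (0:ℝ)..1, (g s) ^ 2 := by
    intro a b ha hb hab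
    have h1 : f a - f b = ∫ s in b..a, g s :=
      (intervalIntegral.integral_eq_sub_of_hasDerivAt (fun x _ => hd x)
        (Continuous.intervalIntegrable (by fun_prop) _ _)).symm
    have h2 : |f a - f b| ≤ ∫ s in (0:ℝ)..1, |g s| := by
      rw [h1]
      refine (intervalIntegral.abs_integral_le_integral_abs hab).trans ?_
      exact intervalIntegral.integral_mono_interval hb.1 hab ha.2
        (Eventually.of_forall fun _ => abs_nonneg _)
        (Continuous.intervalIntegrable (by fun_prop) _ _)
    calc (f a - f b) ^ 2 = |f a - f b| ^ 2 := (sq_abs _).symm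
      _ ≤ (∫ s in (0:ℝ)..1, |g s|) ^ 2 := by gcongr
      _ ≤ ∫ s in (0:ℝ)..1, |g s| ^ 2 := cf_sq_int (by fun_prop)
      _ = _ := by simp only [sq_abs]
  rcases le_total b a with h | h
  · exact key a b ha hb h
  · have := key b a hb ha h
    nlinarith

lemma cf_poincare {f f1 f2 : ℝ × ℝ → ℝ} (hf : Continuous f) (hf1 : Continuous f1)
    (hf2 : Continuous f2)
    (hd1 : ∀ x y, HasDerivAt (fun s => f (s, y)) (f1 (x, y)) x)
    (hd2 : ∀ x y, HasDerivAt (fun s => f (x, s)) (f2 (x, y)) y)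
    (hm : ∫ z in Tsq, f z = 0) :
    ∫ z in Tsq, (f z) ^ 2 ≤ ∫ z in Tsq, ((f1 z) ^ 2 + (f2 z) ^ 2) := by
  have hP : Continuous fun z : ℝ × ℝ => ∫ s in (0:ℝ)..1, (f1 (s, z.2)) ^ 2 :=
    intervalIntegral.continuous_parametric_intervalIntegral_of_continuous' (by fun_prop) _ _
  have hQ : Continuous fun z : ℝ × ℝ => ∫ s in (0:ℝ)..1, (f2 (z.1, s)) ^ 2 :=
    intervalIntegral.continuous_parametric_intervalIntegral_of_continuous' (by fun_prop) _ _
  have iP : ∫ z in Tsq, (∫ s in (0:ℝ)..1, (f1 (s, z.2)) ^ 2) = ∫ z in Tsq, (f1 z) ^ 2 := by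
    rw [cf_int_eq hP, cf_int_eq' (by fun_prop)]; simp
  have iQ : ∫ z in Tsq, (∫ s in (0:ℝ)..1, (f2 (z.1, s)) ^ 2) = ∫ z in Tsq, (f2 z) ^ 2 := by
    rw [cf_int_eq' hQ, cf_int_eq (by fun_prop)]; simp
  have pt : ∀ z ∈ Tsq, ∀ w ∈ Tsq, (f z - f w) ^ 2 ≤
      2 * (∫ s in (0:ℝ)..1, (f1 (s, z.2)) ^ 2) + 2 * ∫ s in (0:ℝ)..1, (f2 (w.1, s)) ^ 2 := by
    rintro ⟨x, y⟩ hz ⟨x', y'⟩ hw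
    have h1 := cf_osc (f := fun s => f (s, y)) (g := fun s => f1 (s, y)) (by fun_prop)
      (fun s => hd1 s y) hz.1 hw.1
    have h2 := cf_osc (f := fun s => f (x', s)) (g := fun s => f2 (x', s)) (by fun_prop)
      (fun s => hd2 x' s) hz.2 hw.2
    simp only at h1 h2 ⊢
    nlinarith [sq_nonneg ((f (x, y) - f (x', y)) - (f (x', y) - f (x', y')))]
  have step : ∀ w ∈ Tsq, (∫ z in Tsq, (f z) ^ 2) + (f w) ^ 2 ≤
      2 * (∫ z in Tsq, (f1 z) ^ 2) + 2 * ∫ s in (0:ℝ)..1, (f2 (w.1, s)) ^ 2 := by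
    intro w hw
    have h := cf_mono (f := fun z => (f z - f w) ^ 2)
      (g := fun z => 2 * (∫ s in (0:ℝ)..1, (f1 (s, z.2)) ^ 2)
        + 2 * ∫ s in (0:ℝ)..1, (f2 (w.1, s)) ^ 2) (by fun_prop) (by fun_prop)
      (fun z hz => pt z hz w hw)
    rw [cf_add (by fun_prop) (by fun_prop), cf_const, integral_const_mul, iP] at h
    have e : ∀ z, (f z - f w) ^ 2 = ((f z) ^ 2 - (2 * f w) * f z) + (f w) ^ 2 := fun z => by ring
    simp only [e] at h
    rw [cf_add (by fun_prop) (by fun_prop), cf_sub (by fun_prop) (by fun_prop), cf_const,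
      integral_const_mul, hm] at h
    linarith
  have h := cf_mono (by fun_prop) (by fun_prop) step
  rw [cf_add (by fun_prop) (by fun_prop), cf_add (by fun_prop) (by fun_prop), cf_const, cf_const,
    integral_const_mul, iQ] at h
  rw [cf_add (by fun_prop) (by fun_prop)]
  linarith


lemma cf_cont_param {f : ℝ × ℝ × ℝ → ℝ} (hf : Continuous f) :
    Continuous fun θ : ℝ => ∫ z in Tsq, f (θ, z) :=
  continuous_parametric_integral_of_continuous (f := fun θ z => f (θ, z)) hf cf_isCompact_Tsq

/-- Increment of a space integral as the integral of the space integral of the θ-derivative. -/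
lemma cf_ftc {f g : ℝ × ℝ × ℝ → ℝ} (hf : Continuous f) (hg : Continuous g)
    (hd : ∀ θ z, HasDerivAt (fun s => f (s, z)) (g (θ, z)) θ) (a b : ℝ) :
    (∫ z in Tsq, f (b, z)) - ∫ z in Tsq, f (a, z) = ∫ θ in a..b, ∫ z in Tsq, g (θ, z) := by
  rw [← cf_sub (by fun_prop) (by fun_prop)]
  have : ∀ z, f (b, z) - f (a, z) = ∫ θ in a..b, g (θ, z) := fun z =>
    (intervalIntegral.integral_eq_sub_of_hasDerivAt (fun x _ => hd x z)
        (Continuous.intervalIntegrable (by fun_prop) _ _)).symm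
  simp only [this]
  symm
  refine intervalIntegral_integral_swap (f := fun θ z => g (θ, z)) ?_
  have h : IntegrableOn g (Set.uIcc a b ×ˢ Tsq) :=
    hg.continuousOn.integrableOn_compact (isCompact_uIcc.prod cf_isCompact_Tsq)
  rw [Measure.volume_eq_prod] at h
  unfold IntegrableOn at h
  rw [← Measure.prod_restrict] at h
  refine h.mono_measure ?_
  gcongr
  exact Set.uIoc_subset_uIcc

/-- A 1-periodic function with `m' = -μ m` vanishes. -/
lemma cf_mean_zero {m : ℝ → ℝ} {μ : ℝ} (hμ : 0 < μ) (hm : Continuous m)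
    (hp : ∀ θ, m (θ + 1) = m θ)
    (h : ∀ a b, m b - m a = ∫ θ in a..b, -μ * m θ) (θ : ℝ) : m θ = 0 := by
  have hd : ∀ b, HasDerivAt m (-μ * m b) b := by
    intro b
    have e : m = fun b => m 0 + ∫ θ in (0:ℝ)..b, -μ * m θ := by
      funext b; rw [← h]; ring
    have h1 : HasDerivAt (fun b => m 0 + ∫ θ in (0:ℝ)..b, -μ * m θ) (-μ * m b) b := by
      refine HasDerivAt.const_add _ ?_
      exact intervalIntegral.integral_hasDerivAt_right
        (Continuous.intervalIntegrable (by fun_prop) _ _)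
        (Continuous.stronglyMeasurableAtFilter (by fun_prop) _ _) (by fun_prop)
    rwa [← e] at h1
  have hd2 : ∀ b, HasDerivAt (fun b => Real.exp (μ * b) * m b) 0 b := by
    intro b
    have h1 : HasDerivAt (fun b : ℝ => Real.exp (μ * b)) (Real.exp (μ * b) * μ) b := by
      have := ((hasDerivAt_id b).const_mul μ).exp
      simpa using this
    exact (h1.mul (hd b)).congr_deriv (by ring)
  have hc := is_const_of_deriv_eq_zero (f := fun b => Real.exp (μ * b) * m b)
    (fun b => (hd2 b).differentiableAt) (fun b => (hd2 b).deriv) (θ + 1) θ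
  simp only [hp] at hc
  have hlt : Real.exp (μ * θ) < Real.exp (μ * (θ + 1)) := Real.exp_lt_exp.2 (by nlinarith)
  have : (Real.exp (μ * (θ + 1)) - Real.exp (μ * θ)) * m θ = 0 := by linarith
  rcases mul_eq_zero.1 this with h | h
  · linarith
  · exact h

/-- Energy estimates. -/
lemma cf_energy {U Ut U1 U2 a F1 F2 H1 H2 : ℝ × ℝ × ℝ → ℝ} {μ ν K : ℝ}
    (hμ : 0 < μ) (hν : 0 < ν)
    (cU : Continuous U) (cUt : Continuous Ut) (cU1 : Continuous U1) (cU2 : Continuous U2)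
    (ca : Continuous a) (cF1 : Continuous F1) (cF2 : Continuous F2)
    (cH1 : Continuous H1) (cH2 : Continuous H2)
    (dUt : ∀ θ z, HasDerivAt (fun s => U (s, z)) (Ut (θ, z)) θ)
    (dU1 : ∀ θ x y, HasDerivAt (fun s => U (θ, s, y)) (U1 (θ, x, y)) x)
    (dU2 : ∀ θ x y, HasDerivAt (fun s => U (θ, x, s)) (U2 (θ, x, y)) y)
    (dH1 : ∀ θ x y, HasDerivAt (fun s => a (θ, s, y) * U1 (θ, s, y) + F1 (θ, s, y))
      (H1 (θ, x, y)) x)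
    (dH2 : ∀ θ x y, HasDerivAt (fun s => a (θ, x, s) * U2 (θ, x, s) + F2 (θ, x, s))
      (H2 (θ, x, y)) y)
    (pU : ∀ θ z, U (θ + 1, z) = U (θ, z))
    (pU1 : ∀ θ y, U (θ, 1, y) = U (θ, 0, y)) (pU2 : ∀ θ x, U (θ, x, 1) = U (θ, x, 0))
    (pG1 : ∀ θ y, a (θ, 1, y) * U1 (θ, 1, y) + F1 (θ, 1, y)
      = a (θ, 0, y) * U1 (θ, 0, y) + F1 (θ, 0, y))
    (pG2 : ∀ θ x, a (θ, x, 1) * U2 (θ, x, 1) + F2 (θ, x, 1)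
      = a (θ, x, 0) * U2 (θ, x, 0) + F2 (θ, x, 0))
    (ha : ∀ p, ν ≤ a p)
    (eq : ∀ p, μ * U p + Ut p = H1 p + H2 p)
    (hK : ∫ θ in (0:ℝ)..1, ∫ z in Tsq, ((F1 (θ, z)) ^ 2 + (F2 (θ, z)) ^ 2) ≤ K) :
    (∫ θ in (0:ℝ)..1, ∫ z in Tsq, ((U1 (θ, z)) ^ 2 + (U2 (θ, z)) ^ 2) ≤ K / ν ^ 2) ∧
    ∀ θ ∈ Set.Icc (0:ℝ) 1, ∫ z in Tsq, (U (θ, z)) ^ 2 ≤ K / ν ^ 2 + 2 * K / ν := by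
  -- mean zero
  have iH1 : ∀ θ, ∫ z in Tsq, H1 (θ, z) = 0 := fun θ =>
    cf_div1 (f := fun z => a (θ, z) * U1 (θ, z) + F1 (θ, z)) (by fun_prop)
      (fun x y => dH1 θ x y) (fun y => pG1 θ y)
  have iH2 : ∀ θ, ∫ z in Tsq, H2 (θ, z) = 0 := fun θ =>
    cf_div2 (f := fun z => a (θ, z) * U2 (θ, z) + F2 (θ, z)) (by fun_prop)
      (fun x y => dH2 θ x y) (fun y => pG2 θ y)
  have mean : ∀ θ, ∫ z in Tsq, U (θ, z) = 0 := by
    refine cf_mean_zero (m := fun θ => ∫ z in Tsq, U (θ, z)) hμ (cf_cont_param cU)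
      (fun θ => by simp only [pU]) ?_
    intro b c
    rw [cf_ftc cU cUt dUt]
    congr 1
    funext θ
    have e : ∀ p, Ut p = (H1 p + H2 p) - μ * U p := fun p => by linarith [eq p]
    simp only [e]
    rw [cf_sub (by fun_prop) (by fun_prop), cf_add (by fun_prop) (by fun_prop), iH1, iH2,
      integral_const_mul]
    ring
  set y : ℝ → ℝ := fun θ => ∫ z in Tsq, (U (θ, z)) ^ 2 with hy
  set zz : ℝ → ℝ := fun θ => ∫ z in Tsq, ((U1 (θ, z)) ^ 2 + (U2 (θ, z)) ^ 2) with hzz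
  set k : ℝ → ℝ := fun θ => ∫ z in Tsq, ((F1 (θ, z)) ^ 2 + (F2 (θ, z)) ^ 2) with hk
  have cy : Continuous y := cf_cont_param (f := fun p => (U p) ^ 2) (by fun_prop)
  have cz : Continuous zz :=
    cf_cont_param (f := fun p => (U1 p) ^ 2 + (U2 p) ^ 2) (by fun_prop)
  have ck : Continuous k :=
    cf_cont_param (f := fun p => (F1 p) ^ 2 + (F2 p) ^ 2) (by fun_prop)
  have kn : ∀ θ, 0 ≤ k θ := fun θ => integral_nonneg fun z => by positivity
  have zn : ∀ θ, 0 ≤ zz θ := fun θ => integral_nonneg fun z => by positivity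
  have yz : ∀ θ, y θ ≤ zz θ := fun θ =>
    cf_poincare (f := fun z => U (θ, z)) (f1 := fun z => U1 (θ, z)) (f2 := fun z => U2 (θ, z))
      (by fun_prop) (by fun_prop) (by fun_prop) (fun x y => dU1 θ x y) (fun x y => dU2 θ x y)
      (mean θ)
  -- dissipation
  have diss : ∀ θ, ∫ z in Tsq, 2 * U (θ, z) * Ut (θ, z) ≤ k θ / ν - ν * zz θ := by
    intro θ
    have j1 : ∫ z in Tsq, (U1 (θ, z) * (a (θ, z) * U1 (θ, z) + F1 (θ, z))
        + U (θ, z) * H1 (θ, z)) = 0 :=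
      cf_div1 (f := fun z => U (θ, z) * (a (θ, z) * U1 (θ, z) + F1 (θ, z))) (by fun_prop)
        (fun x y => (dU1 θ x y).mul (dH1 θ x y)) (fun y => by simp only [pU1, pG1])
    have j2 : ∫ z in Tsq, (U2 (θ, z) * (a (θ, z) * U2 (θ, z) + F2 (θ, z))
        + U (θ, z) * H2 (θ, z)) = 0 :=
      cf_div2 (f := fun z => U (θ, z) * (a (θ, z) * U2 (θ, z) + F2 (θ, z))) (by fun_prop)
        (fun x y => (dU2 θ x y).mul (dH2 θ x y)) (fun y => by simp only [pU2, pG2])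
    have hm := cf_mono
      (f := fun z => 2 * U (θ, z) * Ut (θ, z))
      (g := fun z => ((2 * (U1 (θ, z) * (a (θ, z) * U1 (θ, z) + F1 (θ, z))
          + U (θ, z) * H1 (θ, z))
        + 2 * (U2 (θ, z) * (a (θ, z) * U2 (θ, z) + F2 (θ, z)) + U (θ, z) * H2 (θ, z)))
        + (1 / ν) * ((F1 (θ, z)) ^ 2 + (F2 (θ, z)) ^ 2))
        - ν * ((U1 (θ, z)) ^ 2 + (U2 (θ, z)) ^ 2)) (by fun_prop) (by fun_prop) ?_
    · rw [cf_sub (by fun_prop) (by fun_prop), cf_add (by fun_prop) (by fun_prop),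
        cf_add (by fun_prop) (by fun_prop), integral_const_mul, integral_const_mul,
        integral_const_mul, integral_const_mul, j1, j2] at hm
      refine hm.trans (le_of_eq ?_)
      simp only [hk, hzz]
      ring
    · intro z _
      generalize (θ, z) = p
      have e : Ut p = (H1 p + H2 p) - μ * U p := by linarith [eq p]
      have hap := ha p
      have q : ∀ u f : ℝ, 0 ≤ 2 * (u * (a p * u + f)) + (1 / ν) * f ^ 2 - ν * u ^ 2 := by
        intro u f
        have h1 : 0 ≤ (1 / ν) * (ν * u + f) ^ 2 := by positivity
        have h2 : (1 / ν) * (ν * u + f) ^ 2 = ν * u ^ 2 + 2 * u * f + (1 / ν) * f ^ 2 := by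
          field_simp; ring
        nlinarith [mul_nonneg (sub_nonneg.2 hap) (sq_nonneg u)]
      have q1 := q (U1 p) (F1 p)
      have q2 := q (U2 p) (F2 p)
      simp only [e]
      nlinarith [mul_nonneg hμ.le (sq_nonneg (U p))]
  have incr : ∀ b c, b ≤ c → y c - y b ≤ (1 / ν) * (∫ θ in b..c, k θ) - ν * ∫ θ in b..c, zz θ := by
    intro b c hbc
    have h1 := cf_ftc (f := fun p => (U p) ^ 2) (g := fun p => 2 * U p * Ut p)
      (by fun_prop) (by fun_prop) (fun θ z => by
        have := (dUt θ z).fun_pow 2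
        exact this.congr_deriv (by simp)) b c
    have h2 : ∫ θ in b..c, ∫ z in Tsq, 2 * U (θ, z) * Ut (θ, z)
        ≤ ∫ θ in b..c, ((1 / ν) * k θ - ν * zz θ) := by
      refine intervalIntegral.integral_mono_on hbc ?_ ?_ ?_
      · exact (cf_cont_param (f := fun p => 2 * U p * Ut p) (by fun_prop)).intervalIntegrable _ _
      · exact Continuous.intervalIntegrable (by fun_prop) _ _
      · intro θ _
        refine (diss θ).trans (le_of_eq ?_)
        ring
    rw [intervalIntegral.integral_sub, intervalIntegral.integral_const_mul,
      intervalIntegral.integral_const_mul] at h2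
    · exact h1.le.trans h2
    all_goals exact Continuous.intervalIntegrable (by fun_prop) _ _
  have y01 : y 1 = y 0 := by
    have := fun z => pU 0 z
    simp only [zero_add] at this
    simp only [hy, this]
  have hz : ∫ θ in (0:ℝ)..1, zz θ ≤ K / ν ^ 2 := by
    have h := incr 0 1 zero_le_one
    rw [y01, sub_self] at h
    rw [le_div_iff₀ (by positivity)]
    have h2 : 0 ≤ ν * ((1 / ν) * (∫ θ in (0:ℝ)..1, k θ) - ν * ∫ θ in (0:ℝ)..1, zz θ) :=
      mul_nonneg hν.le h
    have h3 : ν * ((1 / ν) * (∫ θ in (0:ℝ)..1, k θ) - ν * ∫ θ in (0:ℝ)..1, zz θ)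
      = (∫ θ in (0:ℝ)..1, k θ) - ν ^ 2 * ∫ θ in (0:ℝ)..1, zz θ := by field_simp
    linarith
  refine ⟨hz, ?_⟩
  have incr2 : ∀ b c, 0 ≤ b → b ≤ c → c ≤ 1 → y c - y b ≤ K / ν := by
    intro b c hb hbc hc
    have h := incr b c hbc
    have h1 : 0 ≤ ∫ θ in b..c, zz θ := intervalIntegral.integral_nonneg hbc fun _ _ => zn _
    have h2 : ∫ θ in b..c, k θ ≤ K :=
      (intervalIntegral.integral_mono_interval hb hbc hc (Eventually.of_forall kn)
        (ck.intervalIntegrable _ _)).trans hK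
    have h3 : (1 / ν) * (∫ θ in b..c, k θ) ≤ (1 / ν) * K := by gcongr
    have h4 : (1 / ν) * K = K / ν := by ring
    nlinarith
  intro θ hθ
  have h : ∀ b ∈ Set.Icc (0:ℝ) 1, y θ - 2 * K / ν ≤ y b := by
    intro b hb
    have h1 := incr2 0 θ le_rfl hθ.1 hθ.2
    have h2 := incr2 b 1 hb.1 hb.2 le_rfl
    have : 2 * K / ν = K / ν + K / ν := by ring
    linarith
  have h2 : ∫ _b in (0:ℝ)..1, (y θ - 2 * K / ν) ≤ ∫ b in (0:ℝ)..1, y b :=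
    intervalIntegral.integral_mono_on zero_le_one (by simp) (cy.intervalIntegrable _ _) h
  have h3 : ∫ b in (0:ℝ)..1, y b ≤ ∫ b in (0:ℝ)..1, zz b :=
    intervalIntegral.integral_mono_on zero_le_one (cy.intervalIntegrable _ _)
      (cz.intervalIntegrable _ _) fun b _ => yz b
  simp at h2
  linarith


/-- Full parameter space `(t,τ,θ,x)`. -/
abbrev CE := ℝ × ℝ × ℝ × (ℝ × ℝ)

/-- Directional derivative. -/
def cfD (v : CE) (f : CE → ℝ) : CE → ℝ := fun p => fderiv ℝ f p v

/-- Smoothness on the full space. -/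
abbrev CfSmooth (f : CE → ℝ) : Prop := ContDiff ℝ (⊤ : ℕ∞) f

lemma cfD_smooth {f : CE → ℝ} (hf : CfSmooth f) (v : CE) : CfSmooth (cfD v f) := by
  have h : ContDiff ℝ (⊤ : ℕ∞) (fderiv ℝ f) := hf.fderiv_right (by simp)
  exact h.clm_apply contDiff_const

lemma cfS_cont {f : CE → ℝ} (hf : CfSmooth f) : Continuous f := hf.continuous

lemma cfS_diff {f : CE → ℝ} (hf : CfSmooth f) : Differentiable ℝ f := hf.differentiable (by simp)

lemma cfD_comm {f : CE → ℝ} (hf : CfSmooth f) (v w : CE) :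
    cfD v (cfD w f) = cfD w (cfD v f) := by
  funext p
  have h : ContDiff ℝ (⊤ : ℕ∞) (fderiv ℝ f) := hf.fderiv_right (by simp)
  have hd : Differentiable ℝ (fderiv ℝ f) := h.differentiable (by simp)
  have e : ∀ v w : CE, cfD v (cfD w f) p = fderiv ℝ (fderiv ℝ f) p v w := by
    intro v w
    unfold cfD
    rw [fderiv_clm_apply (hd p) (differentiableAt_const w)]
    simp
  rw [e, e]
  have hs : IsSymmSndFDerivAt ℝ f p := by
    refine (hf.contDiffAt).isSymmSndFDerivAt ?_
    simp only [minSmoothness_of_isRCLikeNormedField]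
    exact WithTop.coe_le_coe.2 (le_top : (2:ℕ∞) ≤ ⊤)
  exact hs v w

lemma cfD_per {f : CE → ℝ} {w : CE} (h : ∀ p, f (p + w) = f p) (v : CE) (p : CE) :
    cfD v f (p + w) = cfD v f p := by
  unfold cfD
  rw [← fderiv_comp_add_right]
  simp only [h]

lemma cfD_curve {f : CE → ℝ} (hf : CfSmooth f) {c : ℝ → CE} {v : CE} {s : ℝ}
    (hc : HasDerivAt c v s) : HasDerivAt (fun s => f (c s)) (cfD v f (c s)) s :=
  ((cfS_diff hf (c s)).hasFDerivAt).comp_hasDerivAt s hc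

/-- Basis vectors. -/
abbrev cet : CE := (1, 0, 0, (0, 0))
abbrev cetau : CE := (0, 1, 0, (0, 0))
abbrev ceth : CE := (0, 0, 1, (0, 0))
abbrev cex : CE := (0, 0, 0, (1, 0))
abbrev cey : CE := (0, 0, 0, (0, 1))

lemma cfD_t {f : CE → ℝ} (hf : CfSmooth f) (t τ θ : ℝ) (x : ℝ × ℝ) :
    HasDerivAt (fun s => f (s, τ, θ, x)) (cfD cet f (t, τ, θ, x)) t :=
  cfD_curve hf (c := fun s => (s, τ, θ, x)) ((hasDerivAt_id t).prodMk (hasDerivAt_const t (τ, θ, x)))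

lemma cfD_tau {f : CE → ℝ} (hf : CfSmooth f) (t τ θ : ℝ) (x : ℝ × ℝ) :
    HasDerivAt (fun s => f (t, s, θ, x)) (cfD cetau f (t, τ, θ, x)) τ :=
  cfD_curve hf (c := fun s => (t, s, θ, x)) ((hasDerivAt_const τ t).prodMk
    ((hasDerivAt_id τ).prodMk (hasDerivAt_const τ (θ, x))))

lemma cfD_th {f : CE → ℝ} (hf : CfSmooth f) (t τ θ : ℝ) (x : ℝ × ℝ) :
    HasDerivAt (fun s => f (t, τ, s, x)) (cfD ceth f (t, τ, θ, x)) θ :=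
  cfD_curve hf (c := fun s => (t, τ, s, x)) ((hasDerivAt_const θ t).prodMk
    ((hasDerivAt_const θ τ).prodMk ((hasDerivAt_id θ).prodMk (hasDerivAt_const θ x))))

lemma cfD_x {f : CE → ℝ} (hf : CfSmooth f) (t τ θ x y : ℝ) :
    HasDerivAt (fun s => f (t, τ, θ, s, y)) (cfD cex f (t, τ, θ, x, y)) x :=
  cfD_curve hf (c := fun s => (t, τ, θ, s, y)) ((hasDerivAt_const x t).prodMk
    ((hasDerivAt_const x τ).prodMk ((hasDerivAt_const x θ).prodMk
      ((hasDerivAt_id x).prodMk (hasDerivAt_const x y)))))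

lemma cfD_y {f : CE → ℝ} (hf : CfSmooth f) (t τ θ x y : ℝ) :
    HasDerivAt (fun s => f (t, τ, θ, x, s)) (cfD cey f (t, τ, θ, x, y)) y :=
  cfD_curve hf (c := fun s => (t, τ, θ, x, s)) ((hasDerivAt_const y t).prodMk
    ((hasDerivAt_const y τ).prodMk ((hasDerivAt_const y θ).prodMk
      ((hasDerivAt_const y x).prodMk (hasDerivAt_id y)))))

lemma cfD_space {f : CE → ℝ} (hf : CfSmooth f) (t τ θ : ℝ) (x v : ℝ × ℝ) :
    fderiv ℝ (fun z => f (t, τ, θ, z)) x v = cfD (0, 0, 0, v) f (t, τ, θ, x) := by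
  have h1 : HasFDerivAt (fun z : ℝ × ℝ => ((t, τ, θ, z) : CE))
      ((0 : ℝ × ℝ →L[ℝ] ℝ).prod ((0 : ℝ × ℝ →L[ℝ] ℝ).prod ((0 : ℝ × ℝ →L[ℝ] ℝ).prod
        (ContinuousLinearMap.id ℝ (ℝ × ℝ))))) x :=
    (hasFDerivAt_const t x).prodMk ((hasFDerivAt_const τ x).prodMk
      ((hasFDerivAt_const θ x).prodMk (hasFDerivAt_id x)))
  have h2 := ((cfS_diff hf (t, τ, θ, x)).hasFDerivAt).comp x h1
  have h3 : fderiv ℝ (fun z => f (t, τ, θ, z)) x = _ := h2.fderiv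
  rw [h3]
  rfl

/-- Periodicity in θ, x and y. -/
def CfPer (f : CE → ℝ) : Prop :=
  (∀ p, f (p + ceth) = f p) ∧ (∀ p, f (p + cex) = f p) ∧ (∀ p, f (p + cey) = f p)

lemma CfPer.D {f : CE → ℝ} (h : CfPer f) (v : CE) : CfPer (cfD v f) :=
  ⟨cfD_per h.1 v, cfD_per h.2.1 v, cfD_per h.2.2 v⟩

lemma CfPer.add {f g : CE → ℝ} (hf : CfPer f) (hg : CfPer g) : CfPer (fun p => f p + g p) :=
  ⟨fun p => by simp only [hf.1, hg.1], fun p => by simp only [hf.2.1, hg.2.1],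
    fun p => by simp only [hf.2.2, hg.2.2]⟩

lemma CfPer.mul {f g : CE → ℝ} (hf : CfPer f) (hg : CfPer g) : CfPer (fun p => f p * g p) :=
  ⟨fun p => by simp only [hf.1, hg.1], fun p => by simp only [hf.2.1, hg.2.1],
    fun p => by simp only [hf.2.2, hg.2.2]⟩

lemma CfPer.th {f : CE → ℝ} (h : CfPer f) (t τ θ : ℝ) (z : ℝ × ℝ) :
    f (t, τ, θ + 1, z) = f (t, τ, θ, z) := by
  have := h.1 (t, τ, θ, z)
  obtain ⟨x, y⟩ := z
  simpa using this

lemma CfPer.x {f : CE → ℝ} (h : CfPer f) (t τ θ y : ℝ) :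
    f (t, τ, θ, 1, y) = f (t, τ, θ, 0, y) := by
  have := h.2.1 (t, τ, θ, 0, y)
  simpa using this

lemma CfPer.y {f : CE → ℝ} (h : CfPer f) (t τ θ x : ℝ) :
    f (t, τ, θ, x, 1) = f (t, τ, θ, x, 0) := by
  have := h.2.2 (t, τ, θ, x, 0)
  simpa using this

lemma cfD_add {f g : CE → ℝ} (hf : CfSmooth f) (hg : CfSmooth g) (v : CE) :
    cfD v (fun p => f p + g p) = fun p => cfD v f p + cfD v g p := by
  funext p
  unfold cfD
  rw [fderiv_fun_add (cfS_diff hf p) (cfS_diff hg p)]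
  rfl

lemma cfD_mul {f g : CE → ℝ} (hf : CfSmooth f) (hg : CfSmooth g) (v : CE) :
    cfD v (fun p => f p * g p) = fun p => f p * cfD v g p + cfD v f p * g p := by
  funext p
  unfold cfD
  rw [fderiv_fun_mul (cfS_diff hf p) (cfS_diff hg p)]
  simp
  ring

lemma cfD_const_mul {f : CE → ℝ} (hf : CfSmooth f) (c : ℝ) (v : CE) :
    cfD v (fun p => c * f p) = fun p => c * cfD v f p := by
  funext p
  unfold cfD
  rw [fderiv_const_mul (cfS_diff hf p)]
  rfl

lemma cf_energyE {U a F1 F2 : CE → ℝ} {μ ν K : ℝ} (hμ : 0 < μ) (hν : 0 < ν)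
    (sU : CfSmooth U) (sa : CfSmooth a) (sF1 : CfSmooth F1) (sF2 : CfSmooth F2)
    (pU : CfPer U) (pa : CfPer a) (pF1 : CfPer F1) (pF2 : CfPer F2)
    (ha : ∀ p, ν ≤ a p)
    (eq : ∀ p, μ * U p + cfD ceth U p = cfD cex (fun p => a p * cfD cex U p + F1 p) p
      + cfD cey (fun p => a p * cfD cey U p + F2 p) p) (t τ : ℝ)
    (hK : ∫ θ in (0:ℝ)..1, ∫ z in Tsq, ((F1 (t, τ, θ, z)) ^ 2 + (F2 (t, τ, θ, z)) ^ 2) ≤ K) :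
    (∫ θ in (0:ℝ)..1, ∫ z in Tsq, ((cfD cex U (t, τ, θ, z)) ^ 2 + (cfD cey U (t, τ, θ, z)) ^ 2)
      ≤ K / ν ^ 2) ∧
    ∀ θ ∈ Set.Icc (0:ℝ) 1, ∫ z in Tsq, (U (t, τ, θ, z)) ^ 2 ≤ K / ν ^ 2 + 2 * K / ν := by
  have sG1 : CfSmooth (fun p => a p * cfD cex U p + F1 p) :=
    ContDiff.add (ContDiff.mul sa (cfD_smooth sU _)) sF1
  have sG2 : CfSmooth (fun p => a p * cfD cey U p + F2 p) :=
    ContDiff.add (ContDiff.mul sa (cfD_smooth sU _)) sF2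
  have pG1 : CfPer (fun p => a p * cfD cex U p + F1 p) := (pa.mul (pU.D _)).add pF1
  have pG2 : CfPer (fun p => a p * cfD cey U p + F2 p) := (pa.mul (pU.D _)).add pF2
  have cc : ∀ {f : CE → ℝ}, CfSmooth f → Continuous fun q : ℝ × ℝ × ℝ => f (t, τ, q) :=
    fun hf => (cfS_cont hf).comp (by fun_prop)
  exact cf_energy (U := fun q => U (t, τ, q)) (Ut := fun q => cfD ceth U (t, τ, q))
    (U1 := fun q => cfD cex U (t, τ, q)) (U2 := fun q => cfD cey U (t, τ, q))
    (a := fun q => a (t, τ, q)) (F1 := fun q => F1 (t, τ, q)) (F2 := fun q => F2 (t, τ, q))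
    (H1 := fun q => cfD cex (fun p => a p * cfD cex U p + F1 p) (t, τ, q))
    (H2 := fun q => cfD cey (fun p => a p * cfD cey U p + F2 p) (t, τ, q))
    hμ hν (cc sU) (cc (cfD_smooth sU _)) (cc (cfD_smooth sU _)) (cc (cfD_smooth sU _))
    (cc sa) (cc sF1) (cc sF2) (cc (cfD_smooth sG1 _)) (cc (cfD_smooth sG2 _))
    (fun θ z => cfD_th sU t τ θ z) (fun θ x y => cfD_x sU t τ θ x y)
    (fun θ x y => cfD_y sU t τ θ x y) (fun θ x y => cfD_x sG1 t τ θ x y)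
    (fun θ x y => cfD_y sG2 t τ θ x y) (fun θ z => pU.th t τ θ z) (fun θ y => pU.x t τ θ y)
    (fun θ x => pU.y t τ θ x) (fun θ y => pG1.x t τ θ y) (fun θ x => pG2.y t τ θ x)
    (fun q => ha _) (fun q => eq _) hK

/-- The constant. -/
def cfK (γ ν : ℝ) : ℝ := 2 * γ ^ 2 * (2 * γ ^ 2 / ν ^ 2) + 4 * γ ^ 2

lemma cf_param {S a C1 C2 : CE → ℝ} {μ ν γ δ : ℝ} (hμ : 0 < μ) (hν : 0 < ν)
    (sS : CfSmooth S) (sa : CfSmooth a) (sC1 : CfSmooth C1) (sC2 : CfSmooth C2)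
    (pS : CfPer S) (pa : CfPer a) (pC1 : CfPer C1) (pC2 : CfPer C2)
    (ha : ∀ p, ν ≤ a p)
    (eq : ∀ p, μ * S p + cfD ceth S p = cfD cex (fun p => a p * cfD cex S p + C1 p) p
      + cfD cey (fun p => a p * cfD cey S p + C2 p) p)
    (b1 : ∀ p, |C1 p| ≤ γ) (b2 : ∀ p, |C2 p| ≤ γ) (e : CE)
    (da : ∀ p, |cfD e a p| ≤ δ * γ) (d1 : ∀ p, |cfD e C1 p| ≤ δ * γ)
    (d2 : ∀ p, |cfD e C2 p| ≤ δ * γ) (t τ : ℝ) :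
    ∀ θ ∈ Set.Icc (0:ℝ) 1, ∫ z in Tsq, (cfD e S (t, τ, θ, z)) ^ 2
      ≤ δ ^ 2 * (cfK γ ν / ν ^ 2 + 2 * cfK γ ν / ν) := by
  have cc : ∀ {f : CE → ℝ}, CfSmooth f → Continuous fun q : ℝ × ℝ × ℝ => f (t, τ, q) :=
    fun hf => (cfS_cont hf).comp (by fun_prop)
  have sq : ∀ {u c : ℝ}, |u| ≤ c → u ^ 2 ≤ c ^ 2 := fun h => sq_le_sq' (neg_le_of_abs_le h) (le_of_abs_le h)
  -- first estimate
  have cC1 := cc sC1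
  have cC2 := cc sC2
  have hK0 : ∫ θ in (0:ℝ)..1, ∫ z in Tsq, ((C1 (t, τ, θ, z)) ^ 2 + (C2 (t, τ, θ, z)) ^ 2)
      ≤ 2 * γ ^ 2 := by
    have h : ∀ θ ∈ Set.Icc (0:ℝ) 1,
        ∫ z in Tsq, ((C1 (t, τ, θ, z)) ^ 2 + (C2 (t, τ, θ, z)) ^ 2) ≤ 2 * γ ^ 2 := by
      intro θ _
      rw [← cf_const (2 * γ ^ 2)]
      refine cf_mono (by fun_prop) (by fun_prop) fun z _ => ?_
      linarith [sq (b1 (t, τ, θ, z)), sq (b2 (t, τ, θ, z))]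
    have := intervalIntegral.integral_mono_on (μ := volume) zero_le_one
      ((cf_cont_param (f := fun q => (C1 (t, τ, q)) ^ 2 + (C2 (t, τ, q)) ^ 2)
        (by fun_prop)).intervalIntegrable _ _)
      (continuous_const.intervalIntegrable _ _) h
    simpa using this
  have E1 := (cf_energyE hμ hν sS sa sC1 sC2 pS pa pC1 pC2 ha eq t τ hK0).1
  -- differentiated equation
  have sF : ∀ (v : CE) {c : CE → ℝ}, CfSmooth c →
      CfSmooth (fun p => cfD e a p * cfD v S p + cfD e c p) := fun v c hc =>
    ContDiff.add (ContDiff.mul (cfD_smooth sa _) (cfD_smooth sS _)) (cfD_smooth hc _)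
  have pF : ∀ (v : CE) {c : CE → ℝ}, CfPer c →
      CfPer (fun p => cfD e a p * cfD v S p + cfD e c p) := fun v c hc =>
    ((pa.D _).mul (pS.D _)).add (hc.D _)
  have sG : ∀ (v : CE) {c : CE → ℝ}, CfSmooth c →
      CfSmooth (fun p => a p * cfD v S p + c p) := fun v c hc =>
    ContDiff.add (ContDiff.mul sa (cfD_smooth sS _)) hc
  have dG : ∀ (v : CE) {c : CE → ℝ}, CfSmooth c →
      cfD e (fun p => a p * cfD v S p + c p) =
      fun p => a p * cfD v (cfD e S) p + (cfD e a p * cfD v S p + cfD e c p) := by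
    intro v c hc
    rw [cfD_add (ContDiff.mul sa (cfD_smooth sS v)) hc, cfD_mul sa (cfD_smooth sS v),
      cfD_comm sS e v]
    funext p
    ring
  have eq' : ∀ p, μ * cfD e S p + cfD ceth (cfD e S) p =
      cfD cex (fun p => a p * cfD cex (cfD e S) p + (cfD e a p * cfD cex S p + cfD e C1 p)) p
      + cfD cey (fun p => a p * cfD cey (cfD e S) p
        + (cfD e a p * cfD cey S p + cfD e C2 p)) p := by
    intro p
    have h := congrFun (congrArg (cfD e) (funext eq)) p
    rw [cfD_add (ContDiff.mul contDiff_const sS) (cfD_smooth sS _), cfD_const_mul sS,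
      cfD_add (cfD_smooth (sG _ sC1) _) (cfD_smooth (sG _ sC2) _),
      cfD_comm (sG _ sC1), cfD_comm (sG _ sC2), dG _ sC1, dG _ sC2, cfD_comm sS e ceth] at h
    exact h
  have cF1 := cc (sF cex sC1)
  have cF2 := cc (sF cey sC2)
  have cS1 := cc (cfD_smooth sS cex)
  have cS2 := cc (cfD_smooth sS cey)
  have gS1 := cfS_cont (cfD_smooth sS cex)
  have gS2 := cfS_cont (cfD_smooth sS cey)
  have ga := cfS_cont (cfD_smooth sa e)
  have gC1 := cfS_cont (cfD_smooth sC1 e)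
  have gC2 := cfS_cont (cfD_smooth sC2 e)
  have hK1 : ∫ θ in (0:ℝ)..1, ∫ z in Tsq,
      ((cfD e a (t, τ, θ, z) * cfD cex S (t, τ, θ, z) + cfD e C1 (t, τ, θ, z)) ^ 2
      + (cfD e a (t, τ, θ, z) * cfD cey S (t, τ, θ, z) + cfD e C2 (t, τ, θ, z)) ^ 2)
      ≤ δ ^ 2 * cfK γ ν := by
    have h : ∀ θ ∈ Set.Icc (0:ℝ) 1, ∫ z in Tsq,
      ((cfD e a (t, τ, θ, z) * cfD cex S (t, τ, θ, z) + cfD e C1 (t, τ, θ, z)) ^ 2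
      + (cfD e a (t, τ, θ, z) * cfD cey S (t, τ, θ, z) + cfD e C2 (t, τ, θ, z)) ^ 2)
      ≤ 2 * (δ * γ) ^ 2 * (∫ z in Tsq, ((cfD cex S (t, τ, θ, z)) ^ 2
        + (cfD cey S (t, τ, θ, z)) ^ 2)) + 4 * (δ * γ) ^ 2 := by
      intro θ _
      rw [← integral_const_mul, ← cf_const (4 * (δ * γ) ^ 2),
        ← cf_add (by fun_prop) (by fun_prop)]
      refine cf_mono (by fun_prop) (by fun_prop) fun z _ => ?_
      have q : ∀ {u s c : ℝ}, |u| ≤ δ * γ → |c| ≤ δ * γ →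
          (u * s + c) ^ 2 ≤ 2 * (δ * γ) ^ 2 * s ^ 2 + 2 * (δ * γ) ^ 2 := by
        intro u s c hu hc
        have h1 := sq hu
        have h2 := sq hc
        nlinarith [sq_nonneg (u * s - c), mul_nonneg (sub_nonneg.2 h1) (sq_nonneg s)]
      have q1 := q (s := cfD cex S (t, τ, θ, z)) (da (t, τ, θ, z)) (d1 (t, τ, θ, z))
      have q2 := q (s := cfD cey S (t, τ, θ, z)) (da (t, τ, θ, z)) (d2 (t, τ, θ, z))
      linarith
    have cz := cf_cont_param (f := fun q => (cfD cex S (t, τ, q)) ^ 2 + (cfD cey S (t, τ, q)) ^ 2)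
        (by fun_prop)
    have hm := intervalIntegral.integral_mono_on (μ := volume) zero_le_one
      ((cf_cont_param (f := fun q =>
        (cfD e a (t, τ, q) * cfD cex S (t, τ, q) + cfD e C1 (t, τ, q)) ^ 2
        + (cfD e a (t, τ, q) * cfD cey S (t, τ, q) + cfD e C2 (t, τ, q)) ^ 2)
        (by fun_prop)).intervalIntegrable _ _)
      (Continuous.intervalIntegrable (by fun_prop) _ _) h
    refine hm.trans ?_
    rw [intervalIntegral.integral_add (Continuous.intervalIntegrable (by fun_prop) _ _)
      (Continuous.intervalIntegrable (by fun_prop) _ _), intervalIntegral.integral_const_mul]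
    have h5 := mul_le_mul_of_nonneg_left E1 (show 0 ≤ 2 * (δ * γ) ^ 2 by positivity)
    simp only [intervalIntegral.integral_const, sub_zero, one_smul]
    unfold cfK
    linarith
  intro θ hθ
  have := (cf_energyE hμ hν (cfD_smooth sS e) sa (sF _ sC1) (sF _ sC2) (pS.D e) pa (pF _ pC1)
    (pF _ pC2) ha eq' t τ hK1).2 θ hθ
  refine this.trans (le_of_eq ?_)
  ring

lemma cf_norm_bound {f : ℝ → ℝ × ℝ → ℝ} {δ M : ℝ} (hδ : 0 ≤ δ)
    (h : ∀ θ ∈ Set.Icc (0:ℝ) 1, ∫ z in Tsq, (f θ z) ^ 2 ≤ δ ^ 2 * M) :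
    LinfL2Norm f ≤ δ * Real.sqrt M := by
  unfold LinfL2Norm
  have : Nonempty (Set.Icc (0:ℝ) 1) := ⟨⟨0, by simp⟩⟩
  refine ciSup_le fun θ => ?_
  unfold L2norm
  rw [← Real.sqrt_eq_rpow]
  refine (Real.sqrt_le_sqrt (h θ.1 θ.2)).trans (le_of_eq ?_)
  rw [Real.sqrt_mul (sq_nonneg _), Real.sqrt_sq hδ]

lemma cf_per_of {f : ℝ → ℝ → ℝ → (ℝ × ℝ) → ℝ}
    (h1 : ∀ t τ θ x, f t τ (θ + 1) x = f t τ θ x) (h2 : ∀ t τ θ, SpacePeriodic (f t τ θ)) :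
    CfPer (fun p : CE => f p.1 p.2.1 p.2.2.1 p.2.2.2) := by
  refine ⟨?_, ?_, ?_⟩
  · rintro ⟨t, τ, θ, x, y⟩
    simpa using h1 t τ θ (x, y)
  · rintro ⟨t, τ, θ, x, y⟩
    simpa using (h2 t τ θ (x, y)).1
  · rintro ⟨t, τ, θ, x, y⟩
    simpa using (h2 t τ θ (x, y)).2

/-- Lemma 3.11: for any `μ > 0`, `ν > 0` and `ε > 0`, the `θ`-periodic solution
`S_μ^ν` of the regularized cell problem, depending on the parameters `t` and `τ`,
satisfies `‖∂S_μ^ν/∂t‖_{L^∞_#(ℝ,L²(𝕋²))} ≤ γ₃` and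
`‖∂S_μ^ν/∂τ‖_{L^∞_#(ℝ,L²(𝕋²))} ≤ √ε γ₃`, where `γ₃` depends only on `γ` and `ν`. -/
theorem regularized_cell_solution_parameter_derivative_estimates :
    ∀ γ ν : ℝ, 0 ≤ γ → 0 < ν → ∃ γ₃ : ℝ,
      ∀ (ε : ℝ) (A : ℝ → ℝ → ℝ → (ℝ × ℝ) → ℝ) (C : ℝ → ℝ → ℝ → (ℝ × ℝ) → ℝ × ℝ)
        (μ : ℝ) (S : ℝ → ℝ → ℝ → (ℝ × ℝ) → ℝ),
        0 < ε → ε ≤ 1 → CoeffBasic γ ε A C → 0 < μ →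
        IsRegCellSolP A C μ ν S →
        ∀ t τ : ℝ,
          LinfL2Norm (fun θ x => deriv (fun s => S s τ θ x) t) ≤ γ₃ ∧
          LinfL2Norm (fun θ x => deriv (fun s => S t s θ x) τ) ≤ Real.sqrt ε * γ₃ := by

  intro γ ν hγ hν
  refine ⟨Real.sqrt (cfK γ ν / ν ^ 2 + 2 * cfK γ ν / ν), ?_⟩
  intro ε A C μ S hε _ hAC hμ hS t τ
  obtain ⟨sA, sC, A0, per, sper, H1, H2⟩ := hAC
  obtain ⟨sS, pS, spS, eqS⟩ := hS
  set a : CE → ℝ := fun p => A p.1 p.2.1 p.2.2.1 p.2.2.2 + ν with ha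
  set S' : CE → ℝ := fun p => S p.1 p.2.1 p.2.2.1 p.2.2.2 with hS'
  set C1 : CE → ℝ := fun p => (C p.1 p.2.1 p.2.2.1 p.2.2.2).1 with hC1
  set C2 : CE → ℝ := fun p => (C p.1 p.2.1 p.2.2.1 p.2.2.2).2 with hC2
  have sa : CfSmooth a := ContDiff.add sA contDiff_const
  have sC1 : CfSmooth C1 := sC.fst
  have sC2 : CfSmooth C2 := sC.snd
  have sS' : CfSmooth S' := sS
  have pS' : CfPer S' := cf_per_of pS spS
  have pa : CfPer a := cf_per_of (f := fun t τ θ x => A t τ θ x + ν)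
    (fun t τ θ x => by simp only [(per t τ θ x).2.1])
    (fun t τ θ x => by
      have h := (sper t τ θ).1 x
      exact ⟨by simp only [h.1], by simp only [h.2]⟩)
  have pC1 : CfPer C1 := cf_per_of (f := fun t τ θ x => (C t τ θ x).1)
    (fun t τ θ x => by simp only [(per t τ θ x).2.2.2])
    (fun t τ θ x => by
      have h := (sper t τ θ).2 x
      exact ⟨by simp only [h.1], by simp only [h.2]⟩)
  have pC2 : CfPer C2 := cf_per_of (f := fun t τ θ x => (C t τ θ x).2)
    (fun t τ θ x => by simp only [(per t τ θ x).2.2.2])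
    (fun t τ θ x => by
      have h := (sper t τ θ).2 x
      exact ⟨by simp only [h.1], by simp only [h.2]⟩)
  have ha0 : ∀ p, ν ≤ a p := fun p => by
    have := A0 p.1 p.2.1 p.2.2.1 p.2.2.2
    simp only [ha]; linarith
  have sG1 : CfSmooth (fun p => a p * cfD cex S' p) := ContDiff.mul sa (cfD_smooth sS' _)
  have sG2 : CfSmooth (fun p => a p * cfD cey S' p) := ContDiff.mul sa (cfD_smooth sS' _)
  have eq : ∀ p, μ * S' p + cfD ceth S' p = cfD cex (fun p => a p * cfD cex S' p + C1 p) p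
      + cfD cey (fun p => a p * cfD cey S' p + C2 p) p := by
    rintro ⟨t, τ, θ, x⟩
    have h := eqS t τ θ x
    have g1 : ∀ y, grad (S t τ θ) y = (cfD cex S' (t, τ, θ, y), cfD cey S' (t, τ, θ, y)) := by
      intro y
      unfold grad
      rw [← cfD_space sS' t τ θ y (1, 0), ← cfD_space sS' t τ θ y (0, 1)]
    have d1 : div2 (fun y => (A t τ θ y + ν) • grad (S t τ θ) y) x
        = cfD cex (fun p => a p * cfD cex S' p) (t, τ, θ, x)
          + cfD cey (fun p => a p * cfD cey S' p) (t, τ, θ, x) := by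
      unfold div2
      simp only [g1]
      rw [← cfD_space sG1 t τ θ x (1, 0), ← cfD_space sG2 t τ θ x (0, 1)]
      rfl
    have d2 : div2 (C t τ θ) x = cfD cex C1 (t, τ, θ, x) + cfD cey C2 (t, τ, θ, x) := by
      unfold div2
      rw [← cfD_space sC1 t τ θ x (1, 0), ← cfD_space sC2 t τ θ x (0, 1)]
    have d3 : deriv (fun σ => S t τ σ x) θ = cfD ceth S' (t, τ, θ, x) :=
      (cfD_th sS' t τ θ x).deriv
    rw [d1, d2, d3] at h
    rw [cfD_add sG1 sC1, cfD_add sG2 sC2]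
    simp only [hS'] at h ⊢
    linarith
  have b1 : ∀ p, |C1 p| ≤ γ := fun p =>
    (norm_fst_le (C p.1 p.2.1 p.2.2.1 p.2.2.2)).trans (H1 p.1 p.2.1 p.2.2.1 p.2.2.2).2.1
  have b2 : ∀ p, |C2 p| ≤ γ := fun p =>
    (norm_snd_le (C p.1 p.2.1 p.2.2.1 p.2.2.2)).trans (H1 p.1 p.2.1 p.2.2.1 p.2.2.2).2.1
  constructor
  · have key := cf_param (δ := 1) hμ hν sS' sa sC1 sC2 pS' pa pC1 pC2 ha0 eq b1 b2 cet
      (by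
        rintro ⟨t, τ, θ, x⟩
        have h := (H1 t τ θ x).2.2.1
        have e : deriv (fun s => A s τ θ x + ν) t = cfD cet a (t, τ, θ, x) :=
          (cfD_t sa t τ θ x).deriv
        rw [deriv_add_const] at e
        rwa [← e, one_mul])
      (by
        rintro ⟨t, τ, θ, x⟩
        have h := (H1 t τ θ x).2.2.2.1
        have e : deriv (fun s => C s τ θ x) t = (cfD cet C1 (t, τ, θ, x), cfD cet C2 (t, τ, θ, x)) :=
          ((cfD_t sC1 t τ θ x).prodMk (cfD_t sC2 t τ θ x)).deriv
        rw [e] at h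
        rw [one_mul]
        exact (norm_fst_le _).trans h)
      (by
        rintro ⟨t, τ, θ, x⟩
        have h := (H1 t τ θ x).2.2.2.1
        have e : deriv (fun s => C s τ θ x) t = (cfD cet C1 (t, τ, θ, x), cfD cet C2 (t, τ, θ, x)) :=
          ((cfD_t sC1 t τ θ x).prodMk (cfD_t sC2 t τ θ x)).deriv
        rw [e] at h
        rw [one_mul]
        exact (norm_snd_le _).trans h) t τ
    have e : (fun θ x => deriv (fun s => S s τ θ x) t) = fun θ x => cfD cet S' (t, τ, θ, x) := by
      funext θ x
      exact (cfD_t sS' t τ θ x).deriv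
    rw [e]
    have := cf_norm_bound zero_le_one key
    rwa [one_mul] at this
  · have key := cf_param (δ := Real.sqrt ε) hμ hν sS' sa sC1 sC2 pS' pa pC1 pC2 ha0 eq b1 b2 cetau
      (by
        rintro ⟨t, τ, θ, x⟩
        have h := (H2 t τ θ x).1
        have e : deriv (fun s => A t s θ x + ν) τ = cfD cetau a (t, τ, θ, x) :=
          (cfD_tau sa t τ θ x).deriv
        rw [deriv_add_const] at e
        rwa [← e])
      (by
        rintro ⟨t, τ, θ, x⟩
        have h := (H2 t τ θ x).2.1
        have e : deriv (fun s => C t s θ x) τ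
            = (cfD cetau C1 (t, τ, θ, x), cfD cetau C2 (t, τ, θ, x)) :=
          ((cfD_tau sC1 t τ θ x).prodMk (cfD_tau sC2 t τ θ x)).deriv
        rw [e] at h
        exact (norm_fst_le _).trans h)
      (by
        rintro ⟨t, τ, θ, x⟩
        have h := (H2 t τ θ x).2.1
        have e : deriv (fun s => C t s θ x) τ
            = (cfD cetau C1 (t, τ, θ, x), cfD cetau C2 (t, τ, θ, x)) :=
          ((cfD_tau sC1 t τ θ x).prodMk (cfD_tau sC2 t τ θ x)).deriv
        rw [e] at h
        exact (norm_snd_le _).trans h) t τ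
    have e : (fun θ x => deriv (fun s => S t s θ x) τ)
        = fun θ x => cfD cetau S' (t, τ, θ, x) := by
      funext θ x
      exact (cfD_tau sS' t τ θ x).deriv
    rw [e]
    exact cf_norm_bound (Real.sqrt_nonneg _) key
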